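/- Let (a_n)_{n≥0} satisfy 1 = a_0 ≥ a_1 ≥ a_2 ≥ … and a_i − 2a_{i+1} + a_{i+2} ≥ 0 for all i ≥ 0, and let μ be the unique shift-invariant measure of maximal entropy among invariant ν on {0,1}^ℕ with ν([0^n]) = a_n for all n ≥ 1 (determined by p_{ε w ε'} = p_{ε w} p_{w ε'}/p_w for w not a block of zeros together with the explicit values on cylinders [ε 0^n ε']). Then its measure-theoretic entropy is h_μ = −h(1−a_1) + Σ_{j=0}^∞ h(a_j − 2a_{j+1} + a_{j+2}), where h(x) = −x log x (with h(0) = 0). -/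

import Mathlib

open MeasureTheory Filter Topology Set
open scoped ENNReal NNReal

/-!  General definitions: Bowen topological entropy (via covers by Bowen balls),
measure-theoretic (Kolmogorov–Sinai) entropy, generic points, saturated systems,
and the specification property. -/

variable {X : Type*}

/-- The Bowen ball of center `x`, order `n`, radius `ε` (for the metric
`d_n(x,y) = max_{0 ≤ j < n} d(T^j x, T^j y)`). -/
def bowenBall [PseudoMetricSpace X] (T : X → X) (x : X) (n : ℕ) (ε : ℝ) : Set X :=
  {y | ∀ j < n, dist (T^[j] x) (T^[j] y) < ε}

/-- `H_n^s(Z,ε)`: infimum of `Σ_i exp(-s n_i)` over countable covers of `Z` by Bowen balls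
`B_{n_i}(x_i,ε)` with all `n_i ≥ n`. -/
noncomputable def bowenH [PseudoMetricSpace X] (T : X → X) (Z : Set X) (s ε : ℝ) (n : ℕ) :
    ℝ≥0∞ :=
  ⨅ (C : Set (X × ℕ)) (_ : C.Countable) (_ : ∀ p ∈ C, n ≤ p.2)
    (_ : Z ⊆ ⋃ p ∈ C, bowenBall T p.1 p.2 ε),
    ∑' p : C, ENNReal.ofReal (Real.exp (-s * ((p : X × ℕ).2 : ℝ)))

/-- `h_top(Z,ε)`: the critical exponent of `s ↦ H^s(Z,ε) = sup_n H_n^s(Z,ε)`. -/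
noncomputable def bowenEntropyRes [PseudoMetricSpace X] (T : X → X) (Z : Set X) (ε : ℝ) :
    ℝ≥0∞ :=
  sInf ((fun s : ℝ≥0 => (s : ℝ≥0∞)) '' {s : ℝ≥0 | (⨆ n, bowenH T Z (s : ℝ) ε n) = 0})

/-- Bowen topological entropy of a subset `Z`: `h_top(Z) = lim_{ε → 0} h_top(Z,ε)`
(the limit being a supremum by monotonicity in `ε`). -/
noncomputable def bowenEntropy [PseudoMetricSpace X] (T : X → X) (Z : Set X) : ℝ≥0∞ :=
  ⨆ (ε : ℝ) (_ : 0 < ε), bowenEntropyRes T Z ε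

/-- Entropy of the partition `P ∨ T⁻¹P ∨ ⋯ ∨ T⁻⁽ⁿ⁻¹⁾P`, where a countable partition is
encoded as a function `P : X → ℕ`: it is the Shannon entropy of the map
`x ↦ (P x, P (T x), …, P (Tⁿ⁻¹ x))`. -/
noncomputable def partInfo [MeasurableSpace X] (T : X → X) (μ : Measure X) (P : X → ℕ)
    (n : ℕ) : ℝ≥0∞ :=
  ∑' l : List ℕ, ENNReal.ofReal (Real.negMulLog
    ((μ ((fun x => (List.range n).map fun j => P (T^[j] x)) ⁻¹' {l})).toReal))

/-- Measure-theoretic (Kolmogorov–Sinai) entropy `h_μ(T)`: supremum over finite measurable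
partitions `P` of `lim_n (1/n) H_μ(P ∨ T⁻¹P ∨ ⋯ ∨ T⁻⁽ⁿ⁻¹⁾P)` (the limit exists by
subadditivity, so it may be written as a `liminf`). -/
noncomputable def ksEntropy [MeasurableSpace X] (T : X → X) (μ : Measure X) : ℝ≥0∞ :=
  ⨆ (P : X → ℕ) (_ : Measurable P) (_ : (Set.range P).Finite),
    Filter.atTop.liminf fun n : ℕ => partInfo T μ P n / (n : ℝ≥0∞)

/-- `x` is a generic point for `μ` : the empirical measures `(1/n) Σ_{j<n} δ_{T^j x}`
converge to `μ` in the weak-star topology, i.e. Birkhoff averages of every continuous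
function converge to its integral. -/
def IsGeneric [TopologicalSpace X] [MeasurableSpace X] (T : X → X) (μ : Measure X)
    (x : X) : Prop :=
  ∀ f : C(X, ℝ), Tendsto (fun n : ℕ => (∑ j ∈ Finset.range n, f (T^[j] x)) / (n : ℝ))
    atTop (𝓝 (∫ y, f y ∂μ))

/-- `μ ∈ V(x)` : `μ` is a weak-star limit point of the empirical measures of `x`. -/
def IsLimitMeasure [TopologicalSpace X] [MeasurableSpace X] (T : X → X) (x : X)
    (μ : Measure X) : Prop :=
  ∃ φ : ℕ → ℕ, StrictMono φ ∧ ∀ f : C(X, ℝ),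
    Tendsto (fun m : ℕ => (∑ j ∈ Finset.range (φ m), f (T^[j] x)) / (φ m : ℝ))
      atTop (𝓝 (∫ y, f y ∂μ))

/-- A system is saturated if `h_top(G_μ) = h_μ` for every invariant Borel probability
measure `μ`. -/
def Saturated [PseudoMetricSpace X] [MeasurableSpace X] (T : X → X) : Prop :=
  ∀ μ : Measure X, IsProbabilityMeasure μ → MeasurePreserving T μ μ →
    bowenEntropy T {x | IsGeneric T μ x} = ksEntropy T μ

/-- The specification property. -/
def SpecificationProperty [PseudoMetricSpace X] (T : X → X) : Prop :=
  ∀ ε : ℝ, 0 < ε → ∃ m : ℕ, 1 ≤ m ∧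
    ∀ k : ℕ, 2 ≤ k → ∀ x : ℕ → X, ∀ a b : ℕ → ℕ,
      (∀ i < k, a i ≤ b i) →
      (∀ i, i + 1 < k → b i + m ≤ a (i + 1)) →
      ∃ y : X, ∀ i < k, ∀ n ≤ b i - a i,
        dist (T^[a i + n] y) (T^[n] (x i)) < ε

/-! Symbolic dynamics on `X = {0,1}^ℕ`. -/

/-- The metric `d(x,y) = (1/2)^(first difference)` on the symbolic space `{0,1}^ℕ`. -/
noncomputable instance : MetricSpace (ℕ → Bool) := PiNat.metricSpace

/-- The shift map on `{0,1}^ℕ`. -/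
def shift : (ℕ → Bool) → ℕ → Bool := fun x n => x (n + 1)

/-- The cylinder `[w]` of all sequences beginning with the finite word `w`. -/
def cyl (w : List Bool) : Set (ℕ → Bool) :=
  {x | ∀ i : Fin w.length, x i.1 = w.get i}

/-- `R(x,[w]) = r` : the frequency of visits of the orbit of `x` to the cylinder `[w]`
exists and equals `r`. -/
def hasFreq (w : List Bool) (x : ℕ → Bool) (r : ℝ) : Prop :=
  Filter.Tendsto (fun n : ℕ =>
      (∑ j ∈ Finset.range n, (cyl w).indicator (fun _ => (1 : ℝ)) (shift^[j] x)) / (n : ℝ))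
    Filter.atTop (nhds r)

/-- The values of `μ` on the cylinders `[ε 0^n ε']` prescribed by Lemma 5.4. -/
def cylRel (a : ℕ → ℝ) (μ : Measure (ℕ → Bool)) : Prop :=
  ∀ n : ℕ,
    (μ (cyl (false :: (List.replicate n false ++ [false])))).toReal = a (n + 2) ∧
    (μ (cyl (false :: (List.replicate n false ++ [true])))).toReal
      = a (n + 1) - a (n + 2) ∧
    (μ (cyl (true :: (List.replicate n false ++ [false])))).toReal
      = a (n + 1) - a (n + 2) ∧
    (μ (cyl (true :: (List.replicate n false ++ [true])))).toReal
      = a n - 2 * a (n + 1) + a (n + 2)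

/-- The recursion relations `p_{ε w ε'} = p_{ε w} p_{w ε'} / p_w` (in multiplicative form)
for every word `w` that is not a block of zeros. -/
def markovRel (μ : Measure (ℕ → Bool)) : Prop :=
  ∀ w : List Bool, w ≠ List.replicate w.length false → ∀ e e' : Bool,
    (μ (cyl (e :: (w ++ [e'])))).toReal * (μ (cyl w)).toReal =
      (μ (cyl (e :: w))).toReal * (μ (cyl (w ++ [e']))).toReal

/-! Shannon entropy of random variables with values in a finite type. -/

section FiniteEntropy

open Real (negMulLog log)

/-- The contribution `-x log (x / y)` of an event of probability `x` inside an event of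
probability `y` to the conditional entropy. -/
noncomputable def condTerm (x y : ℝ) : ℝ := negMulLog x + x * log y

lemma condTerm_zero_left (y : ℝ) : condTerm 0 y = 0 := by simp [condTerm]

lemma condTerm_le_scaled {x y t : ℝ} (hx : 0 ≤ x) (hxy : x ≤ y) (ht : 0 < t) :
    condTerm x y ≤ t * y - x - x * log t := by
  rcases hx.eq_or_lt with rfl | hx
  · simp only [condTerm_zero_left]
    nlinarith
  · have hy : 0 < y := hx.trans_le hxy
    have h := Real.log_le_sub_one_of_pos (show 0 < t * y / x by positivity)
    rw [Real.log_div (by positivity) hx.ne', Real.log_mul ht.ne' hy.ne'] at h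
    have h' := mul_le_mul_of_nonneg_left h hx.le
    have : x * (t * y / x - 1) = t * y - x := by field_simp
    rw [this] at h'
    simp only [condTerm, negMulLog]
    linarith

lemma condTerm_le_sub {x y : ℝ} (hx : 0 ≤ x) (hxy : x ≤ y) : condTerm x y ≤ y - x := by
  simpa using condTerm_le_scaled hx hxy one_pos

lemma sum_condTerm_le {ι : Type*} (s : Finset ι) (x y : ι → ℝ) (hx : ∀ i ∈ s, 0 ≤ x i)
    (hxy : ∀ i ∈ s, x i ≤ y i) :
    ∑ i ∈ s, condTerm (x i) (y i) ≤ condTerm (∑ i ∈ s, x i) (∑ i ∈ s, y i) := by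
  rcases (Finset.sum_nonneg hx).eq_or_lt with h0 | h0
  · have hz := (Finset.sum_eq_zero_iff_of_nonneg hx).1 h0.symm
    rw [← h0, condTerm_zero_left, Finset.sum_eq_zero]
    intro i hi
    rw [hz i hi, condTerm_zero_left]
  · have hY : 0 < ∑ i ∈ s, y i := h0.trans_le (Finset.sum_le_sum hxy)
    set X := ∑ i ∈ s, x i
    set Y := ∑ i ∈ s, y i
    calc ∑ i ∈ s, condTerm (x i) (y i)
        ≤ ∑ i ∈ s, (X / Y * y i - x i - x i * log (X / Y)) :=
          Finset.sum_le_sum fun i hi => condTerm_le_scaled (hx i hi) (hxy i hi) (by positivity)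
      _ = X / Y * Y - X - X * log (X / Y) := by
          rw [Finset.sum_sub_distrib, Finset.sum_sub_distrib, ← Finset.mul_sum, ← Finset.sum_mul]
      _ = condTerm X Y := by
          rw [div_mul_cancel₀ _ hY.ne', Real.log_div h0.ne' hY.ne']
          simp only [condTerm, negMulLog]
          ring

lemma negMulLog_sum_le {ι : Type*} (s : Finset ι) (x : ι → ℝ) (hx : ∀ i ∈ s, 0 ≤ x i) :
    negMulLog (∑ i ∈ s, x i) ≤ ∑ i ∈ s, negMulLog (x i) := by
  simp only [negMulLog, neg_mul, Finset.sum_neg_distrib, neg_le_neg_iff, Finset.sum_mul]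
  refine Finset.sum_le_sum fun i hi => ?_
  rcases (hx i hi).eq_or_lt with h | h
  · simp [← h]
  · exact mul_le_mul_of_nonneg_left
      (Real.log_le_log h (Finset.single_le_sum hx hi)) h.le

variable {Ω α β γ : Type*} [MeasurableSpace Ω] [Fintype α] [Fintype β]

/-- Shannon entropy of a random variable with values in a finite type. -/
noncomputable def shannonEntropy (μ : Measure Ω) (F : Ω → α) : ℝ :=
  ∑ a, negMulLog (μ.real (F ⁻¹' {a}))

/-- Conditional Shannon entropy of `F` given `G`. -/
noncomputable def condEntropy (μ : Measure Ω) (F : Ω → α) (G : Ω → β) : ℝ :=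
  ∑ a, ∑ b, condTerm (μ.real (F ⁻¹' {a} ∩ G ⁻¹' {b})) (μ.real (G ⁻¹' {b}))

variable (μ : Measure Ω) [IsFiniteMeasure μ]

lemma measureReal_inter_comp_eq_sum [DecidableEq γ] [MeasurableSpace β] [MeasurableSingletonClass β]
    {G : Ω → β} (hG : Measurable G) (φ : β → γ) (A : Set Ω) (c : γ) :
    μ.real (A ∩ (φ ∘ G) ⁻¹' {c}) = ∑ b with φ b = c, μ.real (A ∩ G ⁻¹' {b}) := by
  have : A ∩ (φ ∘ G) ⁻¹' {c} = A ∩ G ⁻¹' ↑({b | φ b = c} : Finset β) := by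
    ext x; simp
  rw [this]
  have h := sum_measureReal_preimage_singleton (μ := μ.restrict A) ({b | φ b = c} : Finset β)
    (f := G) (fun b _ => hG (measurableSet_singleton b))
  rw [measureReal_restrict_apply (hG (Finset.measurableSet _)), Set.inter_comm] at h
  rw [← h]
  refine Finset.sum_congr rfl fun b _ => ?_
  rw [measureReal_restrict_apply (hG (measurableSet_singleton b)), Set.inter_comm]

lemma sum_measureReal_inter_preimage [MeasurableSpace α] [MeasurableSingletonClass α]
    {F : Ω → α} (hF : Measurable F) (A : Set Ω) :
    ∑ a, μ.real (A ∩ F ⁻¹' {a}) = μ.real A := by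
  have := measureReal_inter_comp_eq_sum μ hF (fun _ => ()) A ()
  simpa [Set.preimage_preimage, Function.comp_def] using this.symm

lemma condEntropy_comp_le [Fintype γ] [MeasurableSpace β] [MeasurableSingletonClass β]
    {F : Ω → α} {G : Ω → β} (hG : Measurable G) (φ : β → γ) :
    condEntropy μ F G ≤ condEntropy μ F (φ ∘ G) := by
  classical
  refine Finset.sum_le_sum fun a _ => ?_
  rw [← Finset.sum_fiberwise Finset.univ φ]
  refine Finset.sum_le_sum fun c _ => ?_
  have h1 := measureReal_inter_comp_eq_sum μ hG φ (F ⁻¹' {a}) c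
  have h2 := measureReal_inter_comp_eq_sum μ hG φ Set.univ c
  simp only [Set.univ_inter] at h2
  rw [h1, h2]
  exact sum_condTerm_le _ _ _ (fun _ _ => measureReal_nonneg)
    (fun _ _ => measureReal_mono Set.inter_subset_right)

lemma shannonEntropy_comp_le [Fintype γ] [MeasurableSpace β] [MeasurableSingletonClass β]
    {G : Ω → β} (hG : Measurable G) (φ : β → γ) :
    shannonEntropy μ (φ ∘ G) ≤ shannonEntropy μ G := by
  classical
  unfold shannonEntropy
  rw [← Finset.sum_fiberwise Finset.univ φ]
  refine Finset.sum_le_sum fun c _ => ?_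
  have h2 := measureReal_inter_comp_eq_sum μ hG φ Set.univ c
  simp only [Set.univ_inter] at h2
  rw [h2]
  exact negMulLog_sum_le _ _ (fun _ _ => measureReal_nonneg)

lemma shannonEntropy_prodMk [MeasurableSpace α] [MeasurableSingletonClass α]
    {F : Ω → α} (hF : Measurable F) (G : Ω → β) :
    shannonEntropy μ (fun x => (F x, G x)) = shannonEntropy μ G + condEntropy μ F G := by
  unfold shannonEntropy condEntropy condTerm
  rw [Fintype.sum_prod_type, Finset.sum_comm, Finset.sum_comm (s := (Finset.univ : Finset α)),
    ← Finset.sum_add_distrib]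
  refine Finset.sum_congr rfl fun b _ => ?_
  have h (a : α) : (fun x => (F x, G x)) ⁻¹' {(a, b)} = F ⁻¹' {a} ∩ G ⁻¹' {b} := by
    ext x; simp
  have hs := sum_measureReal_inter_preimage μ hF (G ⁻¹' {b})
  simp only [h, Finset.sum_add_distrib, ← Finset.sum_mul]
  simp_rw [Set.inter_comm (F ⁻¹' _)]
  rw [hs]
  simp only [negMulLog]
  ring

lemma shannonEntropy_pi_prodMk_le [Fintype γ] [MeasurableSpace α] [MeasurableSingletonClass α]
    [MeasurableSpace β] [MeasurableSingletonClass β] {F : ℕ → Ω → α} (hF : ∀ j, Measurable (F j))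
    {G : Ω → β} (hG : Measurable G) (φ : ℕ → β → γ) (m : ℕ) :
    shannonEntropy μ (fun x => ((fun i : Fin m => F i x), G x)) ≤
      shannonEntropy μ G + ∑ j ∈ Finset.range m, condEntropy μ (F j) (φ j ∘ G) := by
  induction m with
  | zero =>
    have h : (fun b => ((fun i : Fin 0 => i.elim0 : Fin 0 → α), b)) ∘ G =
        fun x => ((fun i : Fin 0 => F i x), G x) := by
      funext x
      exact Prod.ext (Subsingleton.elim _ _) rfl
    simpa [h] using shannonEntropy_comp_le μ hG fun b =>
      ((fun i : Fin 0 => i.elim0 : Fin 0 → α), b)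
  | succ m ih =>
    set L : Ω → (Fin m → α) × β := fun x => ((fun i : Fin m => F i x), G x)
    have hL : Measurable L := by fun_prop
    have h1 := shannonEntropy_comp_le μ (G := fun x => (F m x, L x)) (by fun_prop)
      (fun z => ((Fin.snoc z.2.1 z.1 : Fin (m + 1) → α), z.2.2))
    have h2 : ((fun z => ((Fin.snoc z.2.1 z.1 : Fin (m + 1) → α), z.2.2)) ∘
        fun x => (F m x, L x)) = fun x => ((fun i : Fin (m + 1) => F i x), G x) := by
      funext x
      simp only [Function.comp, L, Prod.mk.injEq, and_true]
      funext i
      refine Fin.lastCases ?_ (fun i => ?_) i <;> simp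
    rw [h2, shannonEntropy_prodMk μ (hF m)] at h1
    have h3 : condEntropy μ (F m) L ≤ condEntropy μ (F m) (φ m ∘ G) :=
      condEntropy_comp_le μ hL (φ m ∘ Prod.snd)
    rw [Finset.sum_range_succ]
    linarith

end FiniteEntropy

/-! Entropy of a partition with respect to the past coordinates of the full shift. -/

section FullShift

open Real (negMulLog log)

/-- The word formed by the first `n` letters of a sequence. -/
def initialWord (n : ℕ) (x : ℕ → Bool) : Fin n → Bool := fun i => x i

lemma measurable_initialWord (n : ℕ) : Measurable (initialWord n) := by
  unfold initialWord
  fun_prop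

lemma measurable_shift : Measurable shift := by
  unfold shift
  fun_prop

lemma shift_iterate_apply (j : ℕ) (x : ℕ → Bool) (i : ℕ) : shift^[j] x i = x (j + i) := by
  induction j generalizing x with
  | zero => simp
  | succ j ih =>
    rw [Function.iterate_succ_apply, ih]
    simp only [shift]
    congr 1
    omega

lemma exists_initialWord_preimage_symmDiff_lt (μ : Measure (ℕ → Bool)) [IsFiniteMeasure μ]
    {B : Set (ℕ → Bool)} (hB : MeasurableSet B) {ε : ℝ} (hε : 0 < ε) :
    ∃ (k : ℕ) (S : Set (Fin k → Bool)), μ.real (symmDiff (initialWord k ⁻¹' S) B) < ε := by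
  obtain ⟨t, ht, hlt⟩ := exists_measure_symmDiff_lt_of_generateFrom_isSetRing (μ := μ)
    (isSetRing_measurableCylinders (α := fun _ : ℕ => Bool))
    ⟨{univ}, by simp, by simpa using univ_mem_measurableCylinders (fun _ : ℕ => Bool), by simp⟩
    generateFrom_measurableCylinders.symm hB (ENNReal.ofReal_pos.2 hε)
  rw [measurableCylinders_nat] at ht
  simp only [mem_iUnion, mem_singleton_iff] at ht
  obtain ⟨a, S, -, rfl⟩ := ht
  refine ⟨a + 1, {w | (fun i : Finset.Iic a =>
    w ⟨i, Nat.lt_succ_of_le (Finset.mem_Iic.1 i.2)⟩) ∈ S}, ?_⟩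
  exact (ENNReal.lt_ofReal_iff_toReal_lt (measure_ne_top _ _)).1 hlt

lemma exists_initialWord_preimage_eq {k K : ℕ} (h : k ≤ K) (S : Set (Fin k → Bool)) :
    ∃ S' : Set (Fin K → Bool), initialWord K ⁻¹' S' = initialWord k ⁻¹' S :=
  ⟨{w | (fun i : Fin k => w (Fin.castLE h i)) ∈ S}, rfl⟩

/-- Conditioning on longer and longer initial words makes the entropy of a finite measurable
partition arbitrarily small. -/
lemma exists_condEntropy_initialWord_lt (μ : Measure (ℕ → Bool)) [IsProbabilityMeasure μ]
    {α : Type*} [Fintype α] [MeasurableSpace α] [MeasurableSingletonClass α]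
    {F : (ℕ → Bool) → α} (hF : Measurable F) {ε : ℝ} (hε : 0 < ε) :
    ∃ k, condEntropy μ F (initialWord k) ≤ ε := by
  classical
  have hm : (0 : ℝ) < Fintype.card α + 1 := by positivity
  set t : ℝ := min 1 (ε / 2 / (Fintype.card α + 1))
  have ht0 : 0 < t := lt_min one_pos (by positivity)
  have ht1 : t ≤ 1 := min_le_left _ _
  have hlog : 0 ≤ -log t := by
    have := Real.log_nonpos ht0.le ht1
    linarith
  set δ : ℝ := ε / 2 / (Fintype.card α + 1) / (1 - log t)
  have hδ : 0 < δ := div_pos (by positivity) (by linarith)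
  choose k S hS using fun a => exists_initialWord_preimage_symmDiff_lt μ
    (hF (measurableSet_singleton a)) hδ
  set K := Finset.univ.sup k
  choose S' hS' using fun a => exists_initialWord_preimage_eq
    (Finset.le_sup (f := k) (Finset.mem_univ a) : k a ≤ K) (S a)
  refine ⟨K, ?_⟩
  have hW := measurable_initialWord K
  have key (a : α) : ∑ w, condTerm (μ.real (F ⁻¹' {a} ∩ initialWord K ⁻¹' {w}))
      (μ.real (initialWord K ⁻¹' {w})) ≤ ε / (Fintype.card α + 1) := by
    have hB : MeasurableSet (F ⁻¹' {a}) := hF (measurableSet_singleton a)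
    have hC : MeasurableSet (initialWord K ⁻¹' S' a) := hW (Set.toFinite _).measurableSet
    have hsd := hS a
    rw [← hS' a, measureReal_symmDiff_eq hC hB] at hsd
    have hcompl (w : Fin K → Bool) : μ.real ((F ⁻¹' {a})ᶜ ∩ initialWord K ⁻¹' {w}) =
        μ.real (initialWord K ⁻¹' {w}) - μ.real (F ⁻¹' {a} ∩ initialWord K ⁻¹' {w}) := by
      have := measureReal_inter_add_sdiff (μ := μ) (s := initialWord K ⁻¹' {w}) hB
      rw [Set.inter_comm, ← Set.sdiff_eq, Set.inter_comm (F ⁻¹' {a})]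
      linarith
    have hsum (A : Set (ℕ → Bool)) (U : Set (Fin K → Bool)) :
        ∑ w with w ∈ U, μ.real (A ∩ initialWord K ⁻¹' {w}) = μ.real (A ∩ initialWord K ⁻¹' U) := by
      have := measureReal_inter_comp_eq_sum μ hW (fun w => decide (w ∈ U)) A true
      simp only [decide_eq_true_eq] at this
      rw [← this]
      congr 2
      ext x
      simp
    have h1 : ∑ w with w ∈ S' a, condTerm (μ.real (F ⁻¹' {a} ∩ initialWord K ⁻¹' {w}))
        (μ.real (initialWord K ⁻¹' {w})) ≤ δ := by
      calc _ ≤ ∑ w with w ∈ S' a, μ.real ((F ⁻¹' {a})ᶜ ∩ initialWord K ⁻¹' {w}) := by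
            refine Finset.sum_le_sum fun w _ => ?_
            rw [hcompl]
            exact condTerm_le_sub measureReal_nonneg (measureReal_mono Set.inter_subset_right)
        _ ≤ δ := by
            rw [hsum, Set.inter_comm, ← Set.sdiff_eq]
            have := measureReal_nonneg (μ := μ) (s := F ⁻¹' {a} \ initialWord K ⁻¹' S' a)
            linarith
    have h2 : ∑ w with w ∉ S' a, condTerm (μ.real (F ⁻¹' {a} ∩ initialWord K ⁻¹' {w}))
        (μ.real (initialWord K ⁻¹' {w})) ≤ t + -log t * δ := by
      calc _ ≤ ∑ w with w ∉ S' a, (t * μ.real (initialWord K ⁻¹' {w}) +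
              -log t * μ.real (F ⁻¹' {a} ∩ initialWord K ⁻¹' {w})) := by
            refine Finset.sum_le_sum fun w _ => ?_
            have h := condTerm_le_scaled (x := μ.real (F ⁻¹' {a} ∩ initialWord K ⁻¹' {w}))
              measureReal_nonneg
              (measureReal_mono (s₂ := initialWord K ⁻¹' {w}) Set.inter_subset_right) ht0
            have := measureReal_nonneg (μ := μ) (s := F ⁻¹' {a} ∩ initialWord K ⁻¹' {w})
            linarith
        _ = t * μ.real (initialWord K ⁻¹' (S' a)ᶜ) +
              -log t * μ.real (F ⁻¹' {a} ∩ initialWord K ⁻¹' (S' a)ᶜ) := by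
            rw [Finset.sum_add_distrib, ← Finset.mul_sum, ← Finset.mul_sum]
            have e1 := hsum (F ⁻¹' {a}) (S' a)ᶜ
            have e2 := hsum univ (S' a)ᶜ
            simp only [Set.mem_compl_iff, Set.univ_inter] at e1 e2
            rw [e1, e2]
        _ ≤ t * 1 + -log t * δ := by
            gcongr
            · exact measureReal_le_one
            · rw [Set.preimage_compl, ← Set.sdiff_eq]
              have := measureReal_nonneg (μ := μ) (s := initialWord K ⁻¹' S' a \ F ⁻¹' {a})
              linarith
        _ = _ := by ring
    rw [← Finset.sum_filter_add_sum_filter_not Finset.univ (· ∈ S' a)]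
    have h3 : δ * (1 - log t) = ε / 2 / (Fintype.card α + 1) :=
      div_mul_cancel₀ _ (by linarith)
    have h4 : t ≤ ε / 2 / (Fintype.card α + 1) := min_le_right _ _
    have h5 : ε / (Fintype.card α + 1) =
      ε / 2 / (Fintype.card α + 1) + ε / 2 / (Fintype.card α + 1) := by ring
    linarith
  calc condEntropy μ F (initialWord K) ≤ ∑ _a : α, ε / (Fintype.card α + 1) :=
        Finset.sum_le_sum fun a _ => key a
    _ = ε * (Fintype.card α / (Fintype.card α + 1)) := by
        rw [Finset.sum_const, nsmul_eq_mul, Finset.card_univ]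
        ring
    _ ≤ ε * 1 := by
        gcongr
        rw [div_le_one hm]
        linarith
    _ = ε := mul_one ε

lemma condEntropy_comp_iterate {Ω α β : Type*} [MeasurableSpace Ω] [Fintype α] [Fintype β]
    [MeasurableSpace α] [MeasurableSingletonClass α] [MeasurableSpace β]
    [MeasurableSingletonClass β] {T : Ω → Ω} {μ : Measure Ω} (hT : MeasurePreserving T μ μ)
    {F : Ω → α} (hF : Measurable F) {G : Ω → β} (hG : Measurable G) (j : ℕ) :
    condEntropy μ (F ∘ T^[j]) (G ∘ T^[j]) = condEntropy μ F G := by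
  have h {A : Set Ω} (hA : MeasurableSet A) : μ.real (T^[j] ⁻¹' A) = μ.real A :=
    congrArg ENNReal.toReal ((hT.iterate j).measure_preimage hA.nullMeasurableSet)
  unfold condEntropy
  simp only [Set.preimage_comp, ← Set.preimage_inter]
  refine Finset.sum_congr rfl fun a _ => Finset.sum_congr rfl fun b _ => ?_
  have hb := hG (measurableSet_singleton b)
  rw [h hb, h ((hF (measurableSet_singleton a)).inter hb)]

lemma shannonEntropy_orbit_le {μ : Measure (ℕ → Bool)} [IsProbabilityMeasure μ]
    (hinv : MeasurePreserving shift μ μ)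
    {α : Type*} [Fintype α] [MeasurableSpace α] [MeasurableSingletonClass α]
    {F : (ℕ → Bool) → α} (hF : Measurable F) (n k : ℕ) :
    shannonEntropy μ (fun x => (fun j : Fin n => F (shift^[j] x))) ≤
      shannonEntropy μ (initialWord (n + k)) + n * condEntropy μ F (initialWord k) := by
  have hFj (j : ℕ) : Measurable (F ∘ shift^[j]) := hF.comp (measurable_shift.iterate j)
  have hW := measurable_initialWord (n + k)
  have h1 := shannonEntropy_comp_le μ
    (G := fun x => ((fun j : Fin n => (F ∘ shift^[j]) x), initialWord (n + k) x))
    ((measurable_pi_lambda _ fun j : Fin n => hFj j).prodMk hW) Prod.fst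
  have h2 := shannonEntropy_pi_prodMk_le μ hFj hW
    (fun j (w : Fin (n + k) → Bool) (i : Fin k) =>
      if h : j + i < n + k then w ⟨j + i, h⟩ else false) n
  refine h1.trans (h2.trans (add_le_add_right (le_of_eq ?_) _))
  rw [← nsmul_eq_mul, ← Finset.card_range n, ← Finset.sum_const, Finset.card_range]
  refine Finset.sum_congr rfl fun j hj => ?_
  rw [← condEntropy_comp_iterate hinv hF (measurable_initialWord k) j]
  congr 1
  funext x i
  have : j + (i : ℕ) < n + k := by
    have := Finset.mem_range.1 hj
    omega
  simp [initialWord, this, shift_iterate_apply]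

/-- The entropy of the partition generated by a function with finitely many values, written
with a finite value type. -/
lemma partInfo_eq_shannonEntropy {Ω κ : Type*} [MeasurableSpace Ω] [Fintype κ] (T : Ω → Ω)
    (μ : Measure Ω) [IsProbabilityMeasure μ] (Q : Ω → κ) {v : κ → ℕ}
    (hv : Function.Injective v) (n : ℕ) :
    partInfo T μ (fun x => v (Q x)) n =
      ENNReal.ofReal (shannonEntropy μ (fun x => (fun j : Fin n => Q (T^[j] x)))) := by
  have hinj : Function.Injective (fun u : Fin n → κ => List.ofFn fun j => v (u j)) := by
    intro u u' h
    funext j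
    exact hv (congrFun (List.ofFn_injective h) j)
  have hlist (x : Ω) : (List.range n).map (fun j => v (Q (T^[j] x))) =
      List.ofFn fun j : Fin n => v (Q (T^[j] x)) := by
    apply List.ext_getElem <;> simp
  unfold partInfo shannonEntropy
  simp only [hlist]
  rw [← hinj.tsum_eq, tsum_fintype, ENNReal.ofReal_sum_of_nonneg]
  · refine Finset.sum_congr rfl fun u _ => ?_
    congr 2
    rw [Measure.real]
    congr 2
    ext x
    simp only [Set.mem_preimage, Set.mem_singleton_iff]
    exact hinj.eq_iff (a := fun j : Fin n => Q (T^[j] x))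
  · exact fun u _ => Real.negMulLog_nonneg measureReal_nonneg measureReal_le_one
  · intro l hl
    by_contra hne
    apply hl
    have : (fun x => List.ofFn fun j : Fin n => v (Q (T^[j] x))) ⁻¹' {l} = ∅ := by
      ext x
      simp only [Set.mem_preimage, Set.mem_singleton_iff, Set.mem_empty_iff_false, iff_false]
      rintro rfl
      exact hne ⟨fun j => Q (T^[j] x), rfl⟩
    simp [this]

/-- The Kolmogorov–Sinai entropy of the shift is the exponential growth rate of the entropies of
initial words. -/
lemma ksEntropy_shift_eq {μ : Measure (ℕ → Bool)} [IsProbabilityMeasure μ]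
    (hinv : MeasurePreserving shift μ μ) {h : ℝ}
    (hlim : Tendsto (fun n : ℕ => shannonEntropy μ (initialWord n) / n) atTop (𝓝 h)) :
    ksEntropy shift μ = ENNReal.ofReal h := by
  have h0 : 0 ≤ h := ge_of_tendsto' hlim fun n => div_nonneg (Finset.sum_nonneg fun u _ =>
    Real.negMulLog_nonneg measureReal_nonneg measureReal_le_one) n.cast_nonneg
  apply le_antisymm
  · refine iSup_le fun P => iSup_le fun hP => iSup_le fun hfin => ?_
    have := hfin.fintype
    set Q : (ℕ → Bool) → Set.range P := Set.rangeFactorization P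
    have hQ : Measurable Q := hP.subtype_mk
    refine ENNReal.le_of_forall_pos_le_add fun ε hε _ => ?_
    obtain ⟨k, hk⟩ := exists_condEntropy_initialWord_lt μ hQ (show (0 : ℝ) < ε from hε)
    have hlim' : Tendsto (fun n : ℕ => ENNReal.ofReal
        (shannonEntropy μ (initialWord (n + k)) / n + ε)) atTop (𝓝 (ENNReal.ofReal (h + ε))) := by
      refine ENNReal.tendsto_ofReal (Tendsto.add_const _ ?_)
      have h1 := (tendsto_add_atTop_iff_nat k).2 hlim
      have h2 : Tendsto (fun n : ℕ => (1 : ℝ) + k / n) atTop (𝓝 (1 + 0)) :=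
        (tendsto_const_div_atTop_nhds_zero_nat (k : ℝ)).const_add 1
      have h3 := h1.mul h2
      rw [add_zero, mul_one] at h3
      refine h3.congr' ?_
      filter_upwards [eventually_gt_atTop 0] with n hn
      have : (0 : ℝ) < n := by exact_mod_cast hn
      push_cast
      field_simp
    have hsum : ENNReal.ofReal (h + ε) = ENNReal.ofReal h + ε := by
      rw [ENNReal.ofReal_add h0 ε.coe_nonneg, ENNReal.ofReal_coe_nnreal]
    rw [← hsum, ← hlim'.liminf_eq]
    refine liminf_le_liminf ?_
    filter_upwards [eventually_gt_atTop 0] with n hn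
    have hn' : (0 : ℝ) < n := by exact_mod_cast hn
    have hpart := partInfo_eq_shannonEntropy shift μ Q Subtype.val_injective n
    rw [show P = fun x => (Q x : ℕ) from rfl, hpart, ← ENNReal.ofReal_natCast,
      ← ENNReal.ofReal_div_of_pos hn']
    apply ENNReal.ofReal_le_ofReal
    rw [div_le_iff₀ hn', add_mul, div_mul_cancel₀ _ hn'.ne', mul_comm (ε : ℝ)]
    exact (shannonEntropy_orbit_le hinv hQ n k).trans (by gcongr)
  · have hv : Function.Injective Bool.toNat := by decide
    refine le_trans (le_of_eq ?_) (le_iSup_of_le (fun x => (x 0).toNat)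
      (le_iSup_of_le ((measurable_of_countable Bool.toNat).comp (measurable_pi_apply 0))
        (le_iSup_of_le ((Set.finite_range Bool.toNat).subset ?_) le_rfl)))
    · rw [← (ENNReal.tendsto_ofReal hlim).liminf_eq]
      refine liminf_congr ?_
      filter_upwards [eventually_gt_atTop 0] with n hn
      have hn' : (0 : ℝ) < n := by exact_mod_cast hn
      rw [partInfo_eq_shannonEntropy shift μ (fun x => x 0) hv n,
        ENNReal.ofReal_div_of_pos hn', ENNReal.ofReal_natCast]
      congr 3
      funext x j
      simp [initialWord, shift_iterate_apply]
    · rintro _ ⟨x, rfl⟩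
      exact ⟨x 0, rfl⟩

end FullShift

/-! Second differences of the entropies of initial words. -/

section InitialWordEntropy

open Real (negMulLog log)

lemma mem_cyl_cons {e : Bool} {w : List Bool} {x : ℕ → Bool} :
    x ∈ cyl (e :: w) ↔ x 0 = e ∧ shift x ∈ cyl w := by
  simp only [cyl, Set.mem_ofPred_eq]
  exact Fin.forall_fin_succ

lemma cyl_nil : cyl [] = univ :=
  Set.eq_univ_of_forall fun _ i => i.elim0

lemma mem_cyl_append_singleton {e : Bool} {w : List Bool} {x : ℕ → Bool} :
    x ∈ cyl (w ++ [e]) ↔ x ∈ cyl w ∧ x w.length = e := by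
  induction w generalizing x with
  | nil => simp [cyl]
  | cons d w ih => simp [mem_cyl_cons, ih, and_assoc, shift]

lemma cyl_ofFn {n : ℕ} (w : Fin n → Bool) : cyl (List.ofFn w) = initialWord n ⁻¹' {w} := by
  ext x
  simp only [cyl, Set.mem_ofPred_eq, Set.mem_preimage, Set.mem_singleton_iff, funext_iff,
    initialWord]
  constructor
  · intro h i
    simpa using h (i.cast (List.length_ofFn).symm)
  · intro h i
    rw [List.get_ofFn]
    exact h (i.cast List.length_ofFn)

lemma measurableSet_cyl (w : List Bool) : MeasurableSet (cyl w) := by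
  rw [← List.ofFn_get w, cyl_ofFn]
  exact measurable_initialWord _ (measurableSet_singleton _)

lemma measureReal_cyl_eq_cons_add {μ : Measure (ℕ → Bool)} [IsProbabilityMeasure μ]
    (hinv : MeasurePreserving shift μ μ) (w : List Bool) :
    μ.real (cyl w) = μ.real (cyl (false :: w)) + μ.real (cyl (true :: w)) := by
  have h1 : μ.real (cyl w) = μ.real (shift ⁻¹' cyl w) :=
    congrArg ENNReal.toReal (hinv.measure_preimage (measurableSet_cyl w).nullMeasurableSet).symm
  have h2 : shift ⁻¹' cyl w = cyl (false :: w) ∪ cyl (true :: w) := by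
    ext x
    cases h : x 0 <;> simp [mem_cyl_cons, h]
  rw [h1, h2, measureReal_union _ (measurableSet_cyl _)]
  refine Set.disjoint_left.2 fun x h h' => ?_
  simp [mem_cyl_cons, (mem_cyl_cons.1 h).1] at h'

lemma measureReal_cyl_eq_append_add (μ : Measure (ℕ → Bool)) [IsProbabilityMeasure μ]
    (w : List Bool) :
    μ.real (cyl w) = μ.real (cyl (w ++ [false])) + μ.real (cyl (w ++ [true])) := by
  have h2 : cyl w = cyl (w ++ [false]) ∪ cyl (w ++ [true]) := by
    ext x
    cases h : x w.length <;> simp [mem_cyl_append_singleton, h]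
  conv_lhs => rw [h2]
  refine measureReal_union (Set.disjoint_left.2 fun x h h' => ?_) (measurableSet_cyl _)
  rw [mem_cyl_append_singleton] at h h'
  simp [h.2] at h'

lemma sum_words_cons (f : List Bool → ℝ) (n : ℕ) :
    ∑ u : Fin (n + 1) → Bool, f (List.ofFn u) =
      ∑ w : Fin n → Bool, (f (false :: List.ofFn w) + f (true :: List.ofFn w)) := by
  rw [← (Fin.consEquiv fun _ => Bool).sum_comp, Fintype.sum_prod_type, Fintype.sum_bool,
    ← Finset.sum_add_distrib]
  refine Finset.sum_congr rfl fun w _ => ?_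
  rw [add_comm]
  simp [Fin.consEquiv]

lemma sum_words_append (f : List Bool → ℝ) (n : ℕ) :
    ∑ u : Fin (n + 1) → Bool, f (List.ofFn u) =
      ∑ w : Fin n → Bool, (f (List.ofFn w ++ [false]) + f (List.ofFn w ++ [true])) := by
  rw [← (Fin.snocEquiv fun _ => Bool).sum_comp, Fintype.sum_prod_type, Fintype.sum_bool,
    ← Finset.sum_add_distrib]
  refine Finset.sum_congr rfl fun w _ => ?_
  rw [add_comm]
  simp only [Fin.snocEquiv, Equiv.coe_fn_mk, List.ofFn_succ', List.concat_eq_append, Fin.snoc_last,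
    Fin.snoc_castSucc]

lemma shannonEntropy_initialWord (μ : Measure (ℕ → Bool)) (n : ℕ) :
    shannonEntropy μ (initialWord n) =
      ∑ w : Fin n → Bool, negMulLog (μ.real (cyl (List.ofFn w))) := by
  simp only [cyl_ofFn, shannonEntropy]

lemma shannonEntropy_initialWord_succ_le (μ : Measure (ℕ → Bool)) [IsProbabilityMeasure μ]
    (n : ℕ) :
    shannonEntropy μ (initialWord (n + 1)) ≤ shannonEntropy μ (initialWord n) + 1 := by
  have hone : ∑ w : Fin n → Bool, μ.real (cyl (List.ofFn w)) = 1 := by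
    have := sum_measureReal_inter_preimage μ (measurable_initialWord n) univ
    simpa [cyl_ofFn] using this
  rw [shannonEntropy_initialWord, shannonEntropy_initialWord,
    sum_words_append fun l => negMulLog (μ.real (cyl l)), ← hone, ← Finset.sum_add_distrib]
  refine Finset.sum_le_sum fun w _ => ?_
  have h := measureReal_cyl_eq_append_add μ (List.ofFn w)
  have h0 := measureReal_nonneg (μ := μ) (s := cyl (List.ofFn w ++ [false]))
  have h1 := measureReal_nonneg (μ := μ) (s := cyl (List.ofFn w ++ [true]))
  have e0 := condTerm_le_sub h0 (by linarith : _ ≤ μ.real (cyl (List.ofFn w)))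
  have e1 := condTerm_le_sub h1 (by linarith : _ ≤ μ.real (cyl (List.ofFn w)))
  have e2 : negMulLog (μ.real (cyl (List.ofFn w))) =
    -(μ.real (cyl (List.ofFn w ++ [false])) + μ.real (cyl (List.ofFn w ++ [true]))) *
      log (μ.real (cyl (List.ofFn w))) := by rw [← h, negMulLog]
  simp only [condTerm] at e0 e1
  linarith

/-- The discrete mutual information of two bits vanishes if they are independent given an event
of mass `P`; here `q` and `r` are the marginals and `p` is the joint law. -/
lemma negMulLog_sum_eq_of_mul_eq {p : Bool → Bool → ℝ} {q r : Bool → ℝ} {P : ℝ}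
    (hp : ∀ e e', p e e' * P = q e * r e') (hpq : ∀ e, q e = p e false + p e true)
    (hpr : ∀ e', r e' = p false e' + p true e') (hq : P = q false + q true)
    (hr : P = r false + r true) (hnonneg : ∀ e e', 0 ≤ p e e') :
    negMulLog (p false false) + negMulLog (p false true) +
      (negMulLog (p true false) + negMulLog (p true true)) =
    negMulLog (q false) + negMulLog (q true) + (negMulLog (r false) + negMulLog (r true)) -
      negMulLog P := by
  by_cases hP : P = 0
  · have h00 := hnonneg false false
    have h01 := hnonneg false true
    have h10 := hnonneg true false
    have h11 := hnonneg true true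
    have := hpq false
    have := hpq true
    have z00 : p false false = 0 := by linarith
    have z01 : p false true = 0 := by linarith
    have z10 : p true false = 0 := by linarith
    have z11 : p true true = 0 := by linarith
    simp [hpq, hpr, hP, z00, z01, z10, z11]
  · have hp' (e e') : p e e' = q e * (r e' / P) := by
      field_simp
      exact hp e e'
    have hr' (e') : negMulLog (r e') = (r e' / P) * negMulLog P + P * negMulLog (r e' / P) := by
      rw [← Real.negMulLog_mul, mul_div_cancel₀ _ hP]
    have hsum : r false / P + r true / P = 1 := by
      rw [← add_div, ← hr, div_self hP]
    simp only [hp', Real.negMulLog_mul]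
    rw [hr' false, hr' true]
    have hP' : negMulLog P = (r false / P + r true / P) * negMulLog P := by rw [hsum, one_mul]
    have h1 : negMulLog (q false) = (r false / P + r true / P) * negMulLog (q false) := by
      rw [hsum, one_mul]
    have h2 : negMulLog (q true) = (r false / P + r true / P) * negMulLog (q true) := by
      rw [hsum, one_mul]
    linear_combination hP' - h1 - h2 -
      (negMulLog (r false / P) + negMulLog (r true / P)) * hq

lemma eq_replicate_length_iff {n : ℕ} (w : Fin n → Bool) :
    List.ofFn w = List.replicate (List.ofFn w).length false ↔ w = fun _ => false := by
  rw [List.length_ofFn, ← List.ofFn_const, List.ofFn_injective.eq_iff]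

variable {a : ℕ → ℝ} {μ : Measure (ℕ → Bool)} [IsProbabilityMeasure μ]

lemma measureReal_cyl_replicate (ha0 : a 0 = 1)
    (hcylzero : ∀ n : ℕ, 1 ≤ n → (μ (cyl (List.replicate n false))).toReal = a n) (n : ℕ) :
    μ.real (cyl (List.replicate n false)) = a n := by
  rcases n.eq_zero_or_pos with rfl | hn
  · simp [cyl_nil, ha0]
  · exact hcylzero n hn

lemma shannonEntropy_initialWord_second_difference (ha0 : a 0 = 1)
    (hinv : MeasurePreserving shift μ μ)
    (hcylzero : ∀ n : ℕ, 1 ≤ n → (μ (cyl (List.replicate n false))).toReal = a n)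
    (hcyl : cylRel a μ) (hmarkov : markovRel μ) (n : ℕ) :
    shannonEntropy μ (initialWord (n + 2)) - 2 * shannonEntropy μ (initialWord (n + 1)) +
        shannonEntropy μ (initialWord n) =
      negMulLog (a n - 2 * a (n + 1) + a (n + 2)) +
      (negMulLog (a (n + 2)) - 2 * negMulLog (a (n + 1)) + negMulLog (a n)) +
      2 * (negMulLog (a (n + 1) - a (n + 2)) - negMulLog (a n - a (n + 1))) := by
  set p : List Bool → ℝ := fun l => μ.real (cyl l)
  set D : List Bool → ℝ := fun w =>
    negMulLog (p (false :: (w ++ [false]))) + negMulLog (p (false :: (w ++ [true]))) +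
    (negMulLog (p (true :: (w ++ [false]))) + negMulLog (p (true :: (w ++ [true])))) -
    (negMulLog (p (false :: w)) + negMulLog (p (true :: w)) +
      (negMulLog (p (w ++ [false])) + negMulLog (p (w ++ [true])))) + negMulLog (p w)
  have hD : shannonEntropy μ (initialWord (n + 2)) - 2 * shannonEntropy μ (initialWord (n + 1)) +
      shannonEntropy μ (initialWord n) = ∑ w : Fin n → Bool, D (List.ofFn w) := by
    have e1 := sum_words_cons (fun l => negMulLog (p l)) n
    have e2 := sum_words_append (fun l => negMulLog (p l)) n
    have e3 := sum_words_cons (fun l => negMulLog (p l)) (n + 1)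
    have e4 := sum_words_append
      (fun l => negMulLog (p (false :: l)) + negMulLog (p (true :: l))) n
    have e5 : ∑ w : Fin n → Bool, D (List.ofFn w) =
        ∑ w : Fin n → Bool, (negMulLog (p (false :: (List.ofFn w ++ [false]))) +
          negMulLog (p (true :: (List.ofFn w ++ [false]))) +
          (negMulLog (p (false :: (List.ofFn w ++ [true]))) +
          negMulLog (p (true :: (List.ofFn w ++ [true]))))) -
        (∑ w : Fin n → Bool, (negMulLog (p (false :: List.ofFn w)) +
          negMulLog (p (true :: List.ofFn w))) +
        ∑ w : Fin n → Bool, (negMulLog (p (List.ofFn w ++ [false])) +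
          negMulLog (p (List.ofFn w ++ [true])))) +
        ∑ w : Fin n → Bool, negMulLog (p (List.ofFn w)) := by
      rw [← Finset.sum_add_distrib, ← Finset.sum_sub_distrib, ← Finset.sum_add_distrib]
      refine Finset.sum_congr rfl fun w _ => ?_
      ring
    simp only [shannonEntropy_initialWord]
    rw [e5, ← e4, ← e3, ← e2, ← e1]
    ring
  have hleft (w : List Bool) : p w = p (false :: w) + p (true :: w) :=
    measureReal_cyl_eq_cons_add hinv w
  have hright (w : List Bool) : p w = p (w ++ [false]) + p (w ++ [true]) :=
    measureReal_cyl_eq_append_add μ w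
  have hzero (w : Fin n → Bool) (hw : w ≠ fun _ => false) : D (List.ofFn w) = 0 := by
    have h := negMulLog_sum_eq_of_mul_eq
      (p := fun e e' => p (e :: (List.ofFn w ++ [e']))) (q := fun e => p (e :: List.ofFn w))
      (r := fun e' => p (List.ofFn w ++ [e'])) (P := p (List.ofFn w))
      (hmarkov _ ((eq_replicate_length_iff w).not.2 hw))
      (fun e => hright (e :: List.ofFn w)) (fun e' => hleft _) (hleft _) (hright _)
      (fun _ _ => measureReal_nonneg)
    simp only [D]
    linarith
  have hp0 (m : ℕ) : p (List.replicate m false) = a m :=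
    measureReal_cyl_replicate ha0 hcylzero m
  rw [hD, Finset.sum_eq_single (fun _ => false) (fun w _ hw => hzero w hw) (by simp),
    List.ofFn_const]
  obtain ⟨c1, c2, c3, c4⟩ := hcyl n
  have d1 : p (false :: List.replicate n false) = a (n + 1) := hp0 (n + 1)
  have d2 : p (List.replicate n false ++ [false]) = a (n + 1) := by
    rw [← hp0 (n + 1), List.replicate_succ']
  have d3 : p (true :: List.replicate n false) = a n - a (n + 1) := by
    linarith [hleft (List.replicate n false), hp0 n]
  have d4 : p (List.replicate n false ++ [true]) = a n - a (n + 1) := by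
    linarith [hright (List.replicate n false), hp0 n]
  change p _ = _ at c1 c2 c3 c4
  simp only [D]
  rw [c1, c2, c3, c4, d1, d2, d3, d4, hp0 n]
  ring

lemma shannonEntropy_initialWord_succ_sub (ha0 : a 0 = 1)
    (hinv : MeasurePreserving shift μ μ)
    (hcylzero : ∀ n : ℕ, 1 ≤ n → (μ (cyl (List.replicate n false))).toReal = a n)
    (hcyl : cylRel a μ) (hmarkov : markovRel μ) (n : ℕ) :
    shannonEntropy μ (initialWord (n + 1)) - shannonEntropy μ (initialWord n) =
      ∑ j ∈ Finset.range n, negMulLog (a j - 2 * a (j + 1) + a (j + 2)) - negMulLog (1 - a 1) +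
      (negMulLog (a (n + 1)) - negMulLog (a n)) + 2 * negMulLog (a n - a (n + 1)) := by
  induction n with
  | zero =>
    have hp0 := measureReal_cyl_replicate ha0 hcylzero
    have h0 : μ.real (cyl []) = 1 := by simpa [ha0] using hp0 0
    have h1 : μ.real (cyl [false]) = a 1 := hp0 1
    have h2 : μ.real (cyl [true]) = 1 - a 1 := by
      have := measureReal_cyl_eq_append_add μ []
      simp only [List.nil_append] at this
      linarith
    rw [shannonEntropy_initialWord, shannonEntropy_initialWord,
      sum_words_cons fun l => negMulLog (μ.real (cyl l))]
    simp [h0, h1, h2, ha0]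
    ring
  | succ n ih =>
    have h := shannonEntropy_initialWord_second_difference ha0 hinv hcylzero hcyl hmarkov n
    rw [Finset.sum_range_succ]
    linarith

end InitialWordEntropy

/-- **Lemma 5.7.** Under the conditions `1 = a_0 ≥ a_1 ≥ ⋯`,
`a_i - 2a_{i+1} + a_{i+2} ≥ 0`, the maximal entropy measure `μ` (characterized by
`μ([0^n]) = a_n`, the relations of Lemma 5.4, and the recursion relations) has entropy
`h_μ = -h(1-a_1) + Σ_{j≥0} h(a_j - 2a_{j+1} + a_{j+2})` where `h(x) = -x log x`. -/
theorem entropy_of_maximal_entropy_measure (a : ℕ → ℝ) (ha0 : a 0 = 1)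
    (hpos : ∀ n, 0 ≤ a n) (hmono : ∀ i : ℕ, a (i + 1) ≤ a i)
    (hconv : ∀ i : ℕ, 0 ≤ a i - 2 * a (i + 1) + a (i + 2))
    (μ : Measure (ℕ → Bool)) (hprob : IsProbabilityMeasure μ)
    (hinv : MeasurePreserving shift μ μ)
    (hcylzero : ∀ n : ℕ, 1 ≤ n → (μ (cyl (List.replicate n false))).toReal = a n)
    (hcyl : cylRel a μ) (hmarkov : markovRel μ) :
    ksEntropy shift μ =
      ENNReal.ofReal (-(Real.negMulLog (1 - a 1)) +
        ∑' j : ℕ, Real.negMulLog (a j - 2 * a (j + 1) + a (j + 2))) := by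
  have ha_anti : Antitone a := antitone_nat_of_succ_le hmono
  have ha_le (n : ℕ) : a n ≤ 1 := ha0 ▸ ha_anti n.zero_le
  obtain ⟨L, hL⟩ : ∃ L, Tendsto a atTop (𝓝 L) :=
    ⟨_, tendsto_atTop_ciInf ha_anti ⟨0, by rintro _ ⟨n, rfl⟩; exact hpos n⟩⟩
  have hL' : Tendsto (fun n => a (n + 1)) atTop (𝓝 L) := (tendsto_add_atTop_iff_nat 1).2 hL
  have hterm (j : ℕ) : 0 ≤ Real.negMulLog (a j - 2 * a (j + 1) + a (j + 2)) :=
    Real.negMulLog_nonneg (hconv j)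
      (by linarith [ha_le j, hmono j, hmono (j + 1), hpos (j + 1)])
  have hstep := shannonEntropy_initialWord_succ_sub ha0 hinv hcylzero hcyl hmarkov
  have hsummable : Summable fun j => Real.negMulLog (a j - 2 * a (j + 1) + a (j + 2)) := by
    refine summable_of_sum_range_le (c := 2 + Real.negMulLog (1 - a 1)) hterm fun n => ?_
    have h1 := shannonEntropy_initialWord_succ_le μ n
    have h2 := hstep n
    have h3 := Real.negMulLog_nonneg (hpos (n + 1)) (ha_le (n + 1))
    have h4 := Real.negMulLog_le_one_sub_self (hpos n)
    have h5 := Real.negMulLog_nonneg (x := a n - a (n + 1)) (by linarith [hmono n])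
      (by linarith [ha_le n, hpos (n + 1)])
    linarith [hpos n]
  refine ksEntropy_shift_eq hinv ?_
  have hcont := Real.continuous_negMulLog
  have hlim : Tendsto (fun n => shannonEntropy μ (initialWord (n + 1)) -
      shannonEntropy μ (initialWord n)) atTop (𝓝 (-(Real.negMulLog (1 - a 1)) +
        ∑' j : ℕ, Real.negMulLog (a j - 2 * a (j + 1) + a (j + 2)))) := by
    simp only [hstep]
    have h1 := ((hcont.tendsto L).comp hL').sub ((hcont.tendsto L).comp hL)
    have h2 := ((hcont.tendsto _).comp (hL.sub hL')).const_mul 2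
    have h3 := hsummable.hasSum.tendsto_sum_nat.sub_const (Real.negMulLog (1 - a 1))
    rw [sub_self] at h1
    rw [sub_self, Real.negMulLog_zero, mul_zero] at h2
    rw [neg_add_eq_sub]
    simpa only [add_zero, Function.comp_apply] using (h3.add h1).add h2
  have hsum (n : ℕ) : ∑ i ∈ Finset.range n, (shannonEntropy μ (initialWord (i + 1)) -
      shannonEntropy μ (initialWord i)) = shannonEntropy μ (initialWord n) := by
    rw [Finset.sum_range_sub fun i => shannonEntropy μ (initialWord i), sub_eq_self,
      shannonEntropy_initialWord]
    simp [cyl_nil]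
  refine hlim.cesaro.congr fun n => ?_
  rw [hsum, div_eq_inv_mul]
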